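/- For every s ∈ [0, 2] there exists a nonempty compact, perfect, totally disconnected subset X of ℂ with Hausdorff dimension exactly s. -/

import Mathlib

/-!
For a nonnegative summable weight sequence `a`, let `digitSum a : {0, 1}^ℕ → ℝ` send `ω` to
`∑ ω n * a n`, and let `digitPair a` be the product of two copies of this map, with values in
`ℝ × ℝ` (identified with `ℂ` by a linear equivalence, which preserves dimension).

When `a (n + 1) ≤ ρ * a n` with `ρ < 1/2`, two sequences first differing at index `N` have digit
sums at distance at least `c * a N` (`le_abs_digitSum_sub`), so `digitPair a` is an embedding and
its range is a compact, uncountable, totally disconnected set. When `b n ≤ C * ν ^ n` with `ν < 1`,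
they have digit sums at distance at most `C' * ν ^ N` (`abs_digitSum_sub_le`). Hence, if
`ν = μ ^ t`, the map `digitPair (μ ^ ·) ω ↦ digitPair b ω` is Hölder with exponent `t`, and
`dimH (range (digitPair b)) ≤ dimH (range (digitPair (μ ^ ·))) / t` (`dimH_digitPair_le`).
No explicit covers or mass distributions are needed:

* for `0 < s < 2` and `a n = λ ^ n` with `λ = 2 ^ (-2 / s)`, comparison with the binary expansion
  (whose range contains the unit square) gives dimension at least `s`, and comparison with
  `μ ^ n` for `μ < 1/2`, whose range has dimension at most `2`, gives dimension at most `r` for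
  every `r > s`;
* for `s = 0` the same upper bound applies to `a n = 4 ^ (-n ^ 2)` for every `r > 0`;
* for `s = 2` inner regularity yields a compact set of positive area among the points with both
  coordinates irrational, and such a set is totally disconnected.

Finally the Cantor–Bendixson theorem replaces the compact set by a perfect one at the cost of
countably many points, which do not affect the dimension (`exists_cantor_of_prod`).
-/

open Set Filter Topology MeasureTheory
open scoped NNReal ENNReal

/-! ### Reduction to uncountable compact subsets of the real plane -/

/-- Cantor–Bendixson: deleting the countable scattered part of an uncountable compact totally
disconnected set leaves a Cantor set of the same dimension. -/
lemma exists_cantor_of_prod {s : ℝ≥0∞} (K : Set (ℝ × ℝ)) (hK : IsCompact K)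
    (htd : IsTotallyDisconnected K) (hunc : ¬ K.Countable) (hdim : dimH K = s) :
    ∃ X : Set ℂ, X.Nonempty ∧ IsCompact X ∧ Perfect X ∧
      IsTotallyDisconnected X ∧ dimH X = s := by
  let e := Complex.equivRealProdCLM.symm
  have hK' : IsCompact (e '' K) := hK.image e.continuous
  obtain ⟨V, D, hV, hD, hVD⟩ := exists_countable_union_perfect_of_isClosed hK'.isClosed
  have hsub : D ⊆ e '' K := hVD ▸ subset_union_right
  have htd' : IsTotallyDisconnected (e '' K) :=
    (e.toHomeomorph.isEmbedding.isTotallyDisconnected_image).2 htd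
  refine ⟨D, ?_, hK'.of_isClosed_subset hD.closed hsub, hD, ?_, ?_⟩
  · rw [nonempty_iff_ne_empty]
    rintro rfl
    apply hunc
    rw [union_empty] at hVD
    rw [← hVD] at hV
    exact (countable_of_injective_of_countable_image e.injective.injOn hV)
  · exact fun t ht hc => htd' t (ht.trans hsub) hc
  · have h1 : dimH (e '' K) = s := by rw [← hdim]; exact e.dimH_image K
    rw [hVD, dimH_union, dimH_countable hV] at h1
    simpa using h1

/-! ### Digit sums -/

/-- The sum `∑ ω n * a n` selected by a sequence `ω` of binary digits. -/
noncomputable def digitSum (a : ℕ → ℝ) (ω : ℕ → Fin 2) : ℝ := ∑' n, ((ω n : ℕ) : ℝ) * a n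

/-- Two independent digit sums, as a point of the plane. -/
noncomputable def digitPair (a : ℕ → ℝ) (p : (ℕ → Fin 2) × (ℕ → Fin 2)) : ℝ × ℝ :=
  (digitSum a p.1, digitSum a p.2)

lemma digit_mem (d : Fin 2) : 0 ≤ ((d : ℕ) : ℝ) ∧ ((d : ℕ) : ℝ) ≤ 1 := by
  fin_cases d <;> simp

lemma summable_digit {a : ℕ → ℝ} (ha : ∀ n, 0 ≤ a n) (hs : Summable a) (ω : ℕ → Fin 2) :
    Summable fun n => ((ω n : ℕ) : ℝ) * a n := by
  refine Summable.of_nonneg_of_le (fun n => mul_nonneg (digit_mem _).1 (ha n)) (fun n => ?_) hs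
  exact mul_le_of_le_one_left (ha n) (digit_mem _).2

lemma continuous_digitSum {a : ℕ → ℝ} (ha : ∀ n, 0 ≤ a n) (hs : Summable a) :
    Continuous (digitSum a) := by
  refine continuous_tsum (u := a) (fun n => ?_) hs (fun n ω => ?_)
  · exact (continuous_of_discreteTopology (f := fun d : Fin 2 => ((d : ℕ) : ℝ))).comp
      (continuous_apply n) |>.mul continuous_const
  · rw [Real.norm_eq_abs, abs_of_nonneg (mul_nonneg (digit_mem _).1 (ha n))]
    exact mul_le_of_le_one_left (ha n) (digit_mem _).2

lemma digitSum_sub {a : ℕ → ℝ} (ha : ∀ n, 0 ≤ a n) (hs : Summable a) (ω η : ℕ → Fin 2) :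
    Summable (fun n => (((ω n : ℕ) : ℝ) - ((η n : ℕ) : ℝ)) * a n) ∧
    digitSum a ω - digitSum a η = ∑' n, (((ω n : ℕ) : ℝ) - ((η n : ℕ) : ℝ)) * a n := by
  have h1 := summable_digit ha hs ω
  have h2 := summable_digit ha hs η
  simp only [sub_mul]
  exact ⟨h1.sub h2, (h1.tsum_sub h2).symm⟩

lemma abs_digit_sub_le {a : ℕ → ℝ} (ha : ∀ n, 0 ≤ a n) (ω η : ℕ → Fin 2) (n : ℕ) :
    |(((ω n : ℕ) : ℝ) - ((η n : ℕ) : ℝ)) * a n| ≤ a n := by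
  rw [abs_mul, abs_of_nonneg (ha n)]
  refine mul_le_of_le_one_left (ha n) ?_
  have h1 := digit_mem (ω n)
  have h2 := digit_mem (η n)
  rw [abs_le]
  constructor <;> linarith

lemma abs_tsum_le_of_geometric {d : ℕ → ℝ} (hd : Summable d) {N : ℕ} (h0 : ∀ n < N, d n = 0)
    {B ν : ℝ} (hν0 : 0 ≤ ν) (hν : ν < 1) (h : ∀ k, |d (k + N)| ≤ B * ν ^ k) :
    |∑' n, d n| ≤ B / (1 - ν) := by
  rw [← hd.sum_add_tsum_nat_add N, Finset.sum_eq_zero (fun i hi => h0 i (Finset.mem_range.1 hi)),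
    zero_add, div_eq_mul_inv, ← Real.norm_eq_abs]
  exact tsum_of_norm_bounded ((hasSum_geometric_of_lt_one hν0 hν).mul_left B) h

lemma abs_digitSum_sub_le {b : ℕ → ℝ} {C ν : ℝ} (hb : ∀ n, 0 ≤ b n) (hν0 : 0 ≤ ν) (hν : ν < 1)
    (hbC : ∀ n, b n ≤ C * ν ^ n) {ω η : ℕ → Fin 2} {N : ℕ} (h : ∀ n < N, ω n = η n) :
    |digitSum b ω - digitSum b η| ≤ C / (1 - ν) * ν ^ N := by
  have hs : Summable b := Summable.of_nonneg_of_le hb hbC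
    ((summable_geometric_of_lt_one hν0 hν).mul_left C)
  obtain ⟨h1, h2⟩ := digitSum_sub hb hs ω η
  rw [h2]
  refine (abs_tsum_le_of_geometric h1 (N := N) (fun n hn => by simp [h n hn])
    (B := C * ν ^ N) hν0 hν fun k => ?_).trans (le_of_eq (by ring))
  refine (abs_digit_sub_le hb ω η _).trans ((hbC _).trans (le_of_eq ?_))
  ring

/-- If the weights decay with ratio `ρ < 1/2`, then the first differing digit dominates all later
ones, since `∑ k ≥ 1, ρ ^ k = ρ / (1 - ρ) < 1`. -/
lemma le_abs_digitSum_sub {a : ℕ → ℝ} {ρ : ℝ} (ha : ∀ n, 0 ≤ a n) (hs : Summable a)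
    (hρ0 : 0 ≤ ρ) (hρ : ρ < 1 / 2) (haρ : ∀ n, a (n + 1) ≤ ρ * a n)
    {ω η : ℕ → Fin 2} {N : ℕ} (h : ∀ n < N, ω n = η n) (hN : ω N ≠ η N) :
    (1 - ρ / (1 - ρ)) * a N ≤ |digitSum a ω - digitSum a η| := by
  obtain ⟨h1, h2⟩ := digitSum_sub ha hs ω η
  have hdecay : ∀ k, a (k + (N + 1)) ≤ ρ * a N * ρ ^ k := by
    intro k
    induction k with
    | zero => simpa using haρ N
    | succ k ih =>
      calc a (k + 1 + (N + 1)) = a (k + (N + 1) + 1) := by ring_nf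
        _ ≤ ρ * a (k + (N + 1)) := haρ _
        _ ≤ ρ * (ρ * a N * ρ ^ k) := by gcongr
        _ = _ := by ring
  have htail : |∑' k, (((ω (k + (N + 1)) : ℕ) : ℝ) - ((η (k + (N + 1)) : ℕ) : ℝ)) *
      a (k + (N + 1))| ≤ ρ * a N / (1 - ρ) :=
    abs_tsum_le_of_geometric ((summable_nat_add_iff (N + 1)).2 h1) (N := 0) (by simp) hρ0
      (by linarith) fun k => (abs_digit_sub_le ha ω η _).trans (hdecay k)
  have hhead : |(((ω N : ℕ) : ℝ) - ((η N : ℕ) : ℝ)) * a N| = a N := by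
    rw [abs_mul, abs_of_nonneg (ha N)]
    have : |((ω N : ℕ) : ℝ) - ((η N : ℕ) : ℝ)| = 1 := by
      generalize ω N = x at hN
      generalize η N = y at hN
      fin_cases x <;> fin_cases y <;> simp_all
    rw [this, one_mul]
  rw [h2, ← h1.sum_add_tsum_nat_add (N + 1), Finset.sum_range_succ,
    Finset.sum_eq_zero (fun i hi => by simp [h i (Finset.mem_range.1 hi)]), zero_add]
  have h3 := abs_sub_abs_le_abs_add ((((ω N : ℕ) : ℝ) - ((η N : ℕ) : ℝ)) * a N)
    (∑' k, (((ω (k + (N + 1)) : ℕ) : ℝ) - ((η (k + (N + 1)) : ℕ) : ℝ)) * a (k + (N + 1)))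
  rw [hhead] at h3
  calc (1 - ρ / (1 - ρ)) * a N = a N - ρ * a N / (1 - ρ) := by ring
    _ ≤ _ := by linarith

lemma exists_first_diff {ω η : ℕ → Fin 2} (h : ω ≠ η) :
    ∃ N, (∀ n < N, ω n = η n) ∧ ω N ≠ η N :=
  ⟨PiNat.firstDiff ω η, fun _ hn => PiNat.apply_eq_of_lt_firstDiff hn,
    PiNat.apply_firstDiff_ne h⟩

lemma one_sub_div_pos {ρ : ℝ} (hρ : ρ < 1 / 2) : 0 < 1 - ρ / (1 - ρ) := by
  rw [sub_pos, div_lt_one (by linarith)]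
  linarith

/-- The range of `digitPair a` is homeomorphic to `{0, 1}^ℕ × {0, 1}^ℕ` when the weights decay with
ratio less than `1/2`. -/
lemma digitPair_cantor {a : ℕ → ℝ} {ρ : ℝ} (ha : ∀ n, 0 < a n) (hs : Summable a)
    (hρ0 : 0 ≤ ρ) (hρ : ρ < 1 / 2) (haρ : ∀ n, a (n + 1) ≤ ρ * a n) :
    IsCompact (range (digitPair a)) ∧ IsTotallyDisconnected (range (digitPair a)) ∧
      ¬ (range (digitPair a)).Countable := by
  have hc := continuous_digitSum (fun n => (ha n).le) hs
  have hcont : Continuous (digitPair a) :=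
    (hc.comp continuous_fst).prodMk (hc.comp continuous_snd)
  have hinj1 : Function.Injective (digitSum a) := by
    intro ω η h
    by_contra hne
    obtain ⟨N, h1, h2⟩ := exists_first_diff hne
    have := le_abs_digitSum_sub (fun n => (ha n).le) hs hρ0 hρ haρ h1 h2
    rw [h, sub_self, abs_zero] at this
    exact absurd this (not_le.2 (mul_pos (one_sub_div_pos hρ) (ha N)))
  have hinj : Function.Injective (digitPair a) := by
    rintro ⟨ω, η⟩ ⟨ω', η'⟩ h
    simp only [digitPair, Prod.mk.injEq] at h
    rw [hinj1 h.1, hinj1 h.2]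
  have hcard : Cardinal.aleph0 < Cardinal.mk (ℕ → Fin 2) := by
    simpa using Cardinal.cantor Cardinal.aleph0
  refine ⟨isCompact_range hcont, ?_, fun h => ?_⟩
  · rw [(hcont.isClosedEmbedding hinj).isEmbedding.isTotallyDisconnected_range]
    infer_instance
  · rw [← image_univ] at h
    have h1 := countable_of_injective_of_countable_image hinj.injOn h
    have h2 : Countable ((ℕ → Fin 2) × (ℕ → Fin 2)) := countable_univ_iff.1 h1
    have h3 : Countable (ℕ → Fin 2) := Function.Injective.countable
      (f := fun ω : ℕ → Fin 2 => (ω, ω)) fun _ _ h => congrArg Prod.fst h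
    exact absurd (Cardinal.mk_le_aleph0_iff.2 h3) (not_le.2 hcard)

/-! ### Hölder comparison -/

/-- A Hölder estimate between two parametrizations over the same index set compares the dimensions
of their ranges. -/
lemma dimH_range_le_of_edist_le {Ω X Y : Type*} [MetricSpace X] [MetricSpace Y]
    [Nonempty Ω] {F : Ω → Y} {G : Ω → X} {C t : ℝ≥0} (ht : 0 < t)
    (h : ∀ p q, edist (F p) (F q) ≤ C * edist (G p) (G q) ^ (t : ℝ)) :
    dimH (range F) ≤ dimH (range G) / t := by
  have hG : ∀ p, G (Function.invFun G (G p)) = G p :=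
    fun p => Function.invFun_eq (f := G) ⟨p, rfl⟩
  have hhol : HolderOnWith C t (F ∘ Function.invFun G) (range G) := by
    rintro _ ⟨p, rfl⟩ _ ⟨q, rfl⟩
    have := h (Function.invFun G (G p)) (Function.invFun G (G q))
    rwa [hG, hG] at this
  have himg : (F ∘ Function.invFun G) '' range G = range F := by
    rw [← range_comp]
    congr 1
    funext p
    have := h (Function.invFun G (G p)) p
    rw [hG, edist_self, ENNReal.zero_rpow_of_pos (by exact_mod_cast ht), mul_zero] at this
    exact edist_le_zero.1 this
  rw [← himg]
  exact hhol.dimH_image_le ht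

lemma dimH_digitPair_le {b : ℕ → ℝ} {C μ : ℝ} {t : ℝ≥0} (ht : 0 < t) (hμ0 : 0 < μ)
    (hμ : μ < 1 / 2) (hb : ∀ n, 0 ≤ b n) (hbC : ∀ n, b n ≤ C * (μ ^ (t : ℝ)) ^ n) :
    dimH (range (digitPair b)) ≤ dimH (range (digitPair fun n => μ ^ n)) / t := by
  set ν := μ ^ (t : ℝ) with hν_def
  have ht' : (0 : ℝ) < t := by exact_mod_cast ht
  have hν0 : 0 ≤ ν := by positivity
  have hν : ν < 1 := Real.rpow_lt_one hμ0.le (by linarith) ht'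
  have hC : 0 ≤ C := by simpa using (hb 0).trans (hbC 0)
  set c := 1 - μ / (1 - μ) with hc_def
  have hc : 0 < c := one_sub_div_pos hμ
  have h1ν : 0 < 1 - ν := by linarith
  have hM : 0 ≤ C / (1 - ν) / c ^ (t : ℝ) := by positivity
  have key : ∀ ω η : ℕ → Fin 2, dist (digitSum b ω) (digitSum b η) ≤
      C / (1 - ν) / c ^ (t : ℝ) *
        dist (digitSum (fun n => μ ^ n) ω) (digitSum (fun n => μ ^ n) η) ^ (t : ℝ) := by
    intro ω η
    rcases eq_or_ne ω η with rfl | hne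
    · simp only [dist_self]; positivity
    obtain ⟨N, h1, h2⟩ := exists_first_diff hne
    have hlow := le_abs_digitSum_sub (a := fun n => μ ^ n) (ρ := μ) (fun n => by positivity)
      (summable_geometric_of_lt_one hμ0.le (by linarith)) hμ0.le hμ
      (fun n => (pow_succ' μ n).le) h1 h2
    rw [Real.dist_eq, Real.dist_eq]
    calc _ ≤ C / (1 - ν) * ν ^ N := abs_digitSum_sub_le hb hν0 hν hbC h1
      _ = C / (1 - ν) / c ^ (t : ℝ) * (c * μ ^ N) ^ (t : ℝ) := by
        rw [Real.mul_rpow hc.le (by positivity), hν_def, ← Real.rpow_natCast,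
          ← Real.rpow_natCast, ← Real.rpow_mul hμ0.le, ← Real.rpow_mul hμ0.le, mul_comm (t : ℝ)]
        field_simp
      _ ≤ _ := by gcongr
  refine dimH_range_le_of_edist_le (C := (C / (1 - ν) / c ^ (t : ℝ)).toNNReal) ht fun p q => ?_
  rw [edist_dist, edist_dist, ENNReal.ofReal_rpow_of_nonneg dist_nonneg ht'.le]
  change _ ≤ ENNReal.ofReal (C / (1 - ν) / c ^ (t : ℝ)) * _
  rw [← ENNReal.ofReal_mul hM]
  refine ENNReal.ofReal_le_ofReal ?_
  rw [Prod.dist_eq]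
  refine max_le ((key p.1 q.1).trans ?_) ((key p.2 q.2).trans ?_)
  · gcongr
    exact le_max_left _ _
  · gcongr
    exact le_max_right _ _

lemma dimH_prod_le_two (K : Set (ℝ × ℝ)) : dimH K ≤ 2 := by
  refine (dimH_mono (subset_univ K)).trans ?_
  rw [Real.dimH_univ_eq_finrank]
  simp

lemma dimH_digitPair_le_ofReal {b : ℕ → ℝ} {C μ r : ℝ} (hr : 0 < r) (hμ0 : 0 < μ)
    (hμ : μ < 1 / 2) (hb : ∀ n, 0 ≤ b n) (hbC : ∀ n, b n ≤ C * (μ ^ (2 / r)) ^ n) :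
    dimH (range (digitPair b)) ≤ ENNReal.ofReal r := by
  have h2 : (0 : ℝ) < 2 / r := by positivity
  have h := dimH_digitPair_le (t := (2 / r).toNNReal) (C := C) (Real.toNNReal_pos.2 h2) hμ0 hμ hb
    (by rwa [Real.coe_toNNReal _ h2.le])
  refine h.trans ((ENNReal.div_le_div_right (dimH_prod_le_two _) _).trans ?_)
  change 2 / ENNReal.ofReal (2 / r) ≤ _
  rw [← ENNReal.ofReal_ofNat 2, ← ENNReal.ofReal_div_of_pos h2]
  apply ENNReal.ofReal_le_ofReal
  field_simp
  exact le_rfl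

/-- Binary expansions fill the unit square. -/
lemma dimH_digitPair_binary :
    dimH (range (digitPair fun n => (((2 : ℕ) : ℝ) ^ (n + 1))⁻¹)) = 2 := by
  refine le_antisymm (dimH_prod_le_two _) ?_
  have hsub : Icc (0 : ℝ) 1 ×ˢ Icc (0 : ℝ) 1 ⊆
      range (digitPair fun n => (((2 : ℕ) : ℝ) ^ (n + 1))⁻¹) := by
    rintro ⟨x, y⟩ ⟨hx, hy⟩
    obtain ⟨ω, -, hω⟩ := Real.ofDigits_SurjOn (b := 2) (by norm_num) hx
    obtain ⟨η, -, hη⟩ := Real.ofDigits_SurjOn (b := 2) (by norm_num) hy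
    exact ⟨(ω, η), Prod.ext hω hη⟩
  refine le_trans ?_ (dimH_mono hsub)
  rw [Real.dimH_of_nonempty_interior]
  · simp
  · rw [interior_prod_eq, interior_Icc]
    exact ⟨(1 / 2, 1 / 2), by norm_num⟩

/-! ### The three cases -/

lemma exists_cantor_two : ∃ X : Set ℂ, X.Nonempty ∧ IsCompact X ∧ Perfect X ∧
    IsTotallyDisconnected X ∧ dimH X = 2 := by
  let A : Set (ℝ × ℝ) := {x | Irrational x} ×ˢ {x | Irrational x}
  have hI : {x : ℝ | Irrational x} = (range ((↑) : ℚ → ℝ))ᶜ := rfl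
  have hc : (range ((↑) : ℚ → ℝ)).Countable := countable_range _
  have hIm : MeasurableSet {x : ℝ | Irrational x} := hI ▸ hc.measurableSet.compl
  have hvol : volume {x : ℝ | Irrational x} = ∞ := by
    rw [hI, measure_compl hc.measurableSet (by simp [hc.measure_zero]), hc.measure_zero]
    simp
  have hA : (0 : ℝ≥0∞) < volume A := by
    rw [Measure.volume_eq_prod, Measure.prod_prod, hvol]
    simp
  obtain ⟨K, hKA, hK, hKpos⟩ := (hIm.prod hIm).exists_lt_isCompact hA
  -- A connected subset of the irrationals is a point, as otherwise it would contain an interval.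
  have hirr : ∀ T : Set ℝ, IsPreconnected T → (∀ x ∈ T, Irrational x) → T.Subsingleton := by
    intro T hT hirr x hx y hy
    by_contra hne
    wlog hlt : x < y generalizing x y
    · exact this hy hx (Ne.symm hne) (lt_of_le_of_ne (not_lt.1 hlt) (Ne.symm hne))
    obtain ⟨q, hq1, hq2⟩ := exists_rat_btwn hlt
    exact hirr q (hT.ordConnected.out hx hy ⟨hq1.le, hq2.le⟩) ⟨q, rfl⟩
  have hdim : dimH K = 2 := by
    refine le_antisymm (dimH_prod_le_two K) (not_lt.1 fun hlt => ?_)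
    have : μH[((2 : ℝ≥0) : ℝ)] K = 0 := hausdorffMeasure_of_dimH_lt (by simpa using hlt)
    rw [NNReal.coe_ofNat, hausdorffMeasure_prod_real] at this
    exact hKpos.ne' this
  refine exists_cantor_of_prod K hK (fun T hT hpre p hp q hq => ?_) (fun h => ?_) hdim
  · refine Prod.ext ?_ ?_
    · exact hirr _ (hpre.image _ continuous_fst.continuousOn)
        (by rintro _ ⟨z, hz, rfl⟩; exact (hKA (hT hz)).1) ⟨p, hp, rfl⟩ ⟨q, hq, rfl⟩
    · exact hirr _ (hpre.image _ continuous_snd.continuousOn)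
        (by rintro _ ⟨z, hz, rfl⟩; exact (hKA (hT hz)).2) ⟨p, hp, rfl⟩ ⟨q, hq, rfl⟩
  · rw [dimH_countable h] at hdim
    norm_num at hdim

lemma exists_cantor_zero : ∃ X : Set ℂ, X.Nonempty ∧ IsCompact X ∧ Perfect X ∧
    IsTotallyDisconnected X ∧ dimH X = 0 := by
  let a : ℕ → ℝ := fun n => (1 / 4 : ℝ) ^ (n ^ 2)
  have ha : ∀ n, 0 < a n := fun n => by positivity
  have hs : Summable a := by
    refine Summable.of_nonneg_of_le (fun n => (ha n).le) (fun n => ?_)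
      (summable_geometric_of_lt_one (r := (1 / 4 : ℝ)) (by norm_num) (by norm_num))
    exact pow_le_pow_of_le_one (by norm_num) (by norm_num) (by nlinarith)
  obtain ⟨h1, h2, h3⟩ := digitPair_cantor (ρ := 1 / 4) ha hs (by norm_num) (by norm_num)
    fun n => by
      rw [← pow_succ']
      have : (n + 1) ^ 2 = n ^ 2 + 1 + 2 * n := by ring
      exact pow_le_pow_of_le_one (by norm_num) (by norm_num) (by omega)
  refine exists_cantor_of_prod _ h1 h2 h3 (le_antisymm ?_ zero_le)
  refine ENNReal.le_of_forall_pos_le_add fun r hr _ => ?_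
  rw [zero_add, ← ENNReal.ofReal_coe_nnreal]
  have hr' : (0 : ℝ) < r := by exact_mod_cast hr
  -- With `u = 2 / r`, the constant `4 ^ (u ^ 2)` works because `u * n - u ^ 2 ≤ n ^ 2`.
  refine dimH_digitPair_le_ofReal (μ := 1 / 4) (C := (1 / 4 : ℝ) ^ (-(2 / (r : ℝ)) ^ 2)) hr'
    (by norm_num) (by norm_num) (fun n => (ha n).le) fun n => ?_
  rw [← Real.rpow_natCast ((1 / 4 : ℝ) ^ (2 / (r : ℝ))), ← Real.rpow_mul (by norm_num),
    ← Real.rpow_add (by norm_num)]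
  change (1 / 4 : ℝ) ^ (n ^ 2) ≤ _
  rw [← Real.rpow_natCast (1 / 4 : ℝ)]
  refine Real.rpow_le_rpow_of_exponent_ge (by norm_num) (by norm_num) ?_
  push_cast
  nlinarith [sq_nonneg (2 / (r : ℝ) - n), sq_nonneg (2 / (r : ℝ)), sq_nonneg (n : ℝ)]

lemma exists_cantor_between {s : ℝ} (hs0 : 0 < s) (hs2 : s < 2) :
    ∃ X : Set ℂ, X.Nonempty ∧ IsCompact X ∧ Perfect X ∧
      IsTotallyDisconnected X ∧ dimH X = ENNReal.ofReal s := by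
  -- The ratio for which four copies scaled by `l` satisfy Moran's equation `4 * l ^ s = 1`.
  set l : ℝ := (1 / 2 : ℝ) ^ (2 / s) with hl
  have hl0 : 0 < l := by positivity
  have hl2 : l < 1 / 2 := by
    conv_rhs => rw [← Real.rpow_one (1 / 2 : ℝ)]
    exact Real.rpow_lt_rpow_of_exponent_gt (by norm_num) (by norm_num) ((one_lt_div hs0).2 hs2)
  obtain ⟨h1, h2, h3⟩ := digitPair_cantor (a := fun n => l ^ n) (ρ := l)
    (fun n => by positivity) (summable_geometric_of_lt_one hl0.le (by linarith)) hl0.le hl2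
    fun n => (pow_succ' l n).le
  refine exists_cantor_of_prod _ h1 h2 h3 (le_antisymm ?_ ?_)
  · refine ENNReal.le_of_forall_pos_le_add fun ε hε _ => ?_
    have hεpos : (0 : ℝ) < ε := by exact_mod_cast hε
    rw [← ENNReal.ofReal_coe_nnreal, ← ENNReal.ofReal_add hs0.le hεpos.le]
    -- `μ` is chosen so that `μ ^ (2 / (s + ε)) = l`; it is below `1/2` because `s < s + ε`.
    refine dimH_digitPair_le_ofReal (μ := (1 / 2 : ℝ) ^ ((s + ε) / s)) (C := 1) (by positivity)
      (by positivity) ?_ (fun n => by positivity) fun n => ?_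
    · conv_rhs => rw [← Real.rpow_one (1 / 2 : ℝ)]
      exact Real.rpow_lt_rpow_of_exponent_gt (by norm_num) (by norm_num)
        ((one_lt_div hs0).2 (by linarith))
    · rw [← Real.rpow_mul (by norm_num), one_mul, hl]
      have : (s + ε) / s * (2 / (s + ε)) = 2 / s := by field_simp
      rw [this]
  · have hs' : 0 < s / 2 := by positivity
    have h := dimH_digitPair_le (b := fun n => (((2 : ℕ) : ℝ) ^ (n + 1))⁻¹) (C := 1)
      (t := (s / 2).toNNReal) (Real.toNNReal_pos.2 hs') hl0 hl2 (fun n => by positivity)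
      fun n => by
        have : 2 / s * (s / 2) = 1 := by field_simp
        rw [Real.coe_toNNReal _ hs'.le, hl, ← Real.rpow_mul (by norm_num), this, Real.rpow_one,
          one_mul, one_div, inv_pow, Nat.cast_ofNat]
        gcongr
        · norm_num
        · omega
    rw [dimH_digitPair_binary] at h
    change 2 ≤ _ / ENNReal.ofReal (s / 2) at h
    rw [ENNReal.le_div_iff_mul_le (Or.inl (by simpa using hs0)) (Or.inl ENNReal.ofReal_ne_top),
      ← ENNReal.ofReal_ofNat 2, ← ENNReal.ofReal_mul (by norm_num)] at h
    rwa [mul_div_cancel₀ s (by norm_num)] at h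

theorem cantor_set_any_dimension (s : ℝ) (hs0 : 0 ≤ s) (hs2 : s ≤ 2) :
    ∃ X : Set ℂ, X.Nonempty ∧ IsCompact X ∧ Perfect X ∧
      IsTotallyDisconnected X ∧ dimH X = ENNReal.ofReal s := by
  rcases hs0.eq_or_lt with rfl | h0
  · simpa using exists_cantor_zero
  rcases hs2.eq_or_lt with rfl | h2
  · simpa using exists_cantor_two
  exact exists_cantor_between h0 h2
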